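/- arXiv:2011.13171 — 4 statements merged into one kernel-verified Lean document; each statement's English description precedes it below -/
import Mathlib

section
/- There exist a Borel set D ⊆ (ℕ → Bool) with μ(D) = 1 and a function T : (ℕ → Bool) → (ℕ → Bool) such that: μ(D ∩ T⁻¹(A)) = μ(A) for every measurable set A; T is continuous on D (with respect to the product topology); but T is not uniformly continuous on D with respect to the standard metric. -/
open MeasureTheory

/-- The uniform Bernoulli(1/2) ("fair coin") measure on `Bool`. -/
noncomputable def coin : Measure Bool := (PMF.bernoulli 2⁻¹ (by norm_num)).toMeasure

/-- `μ` is the fair-coin measure on Cantor space: the product over `ℕ` of uniform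
Bernoulli(1/2) measures, characterized by the fact that all finite-dimensional marginals
are finite products of `coin`. -/
def IsFairCoin (μ : Measure (ℕ → Bool)) : Prop :=
  IsProjectiveLimit μ (fun J : Finset ℕ => Measure.pi fun _ : J => coin)

open Classical in
/-- The standard metric on Cantor space: `d α β = 2^(-n)` where `n` is the least index
at which `α` and `β` differ, and `d α α = 0`. -/
noncomputable def dC (α β : ℕ → Bool) : ℝ :=
  if α = β then 0 else 2 ^ (-((sInf {n : ℕ | α n ≠ β n} : ℕ) : ℤ))

/-!
Toss `0` is reversed or kept according to the parity of the time of the first heads among the later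
tosses. The two cases are events that do not depend on toss `0`, so reversing a fair toss on one of
them only preserves the measure. Almost surely there is a first heads, and the cases are open, which
gives continuity; but both accumulate at the outcome where every toss is tails, so arbitrarily close
outcomes with the same toss `0` are sent to outcomes that differ at time `0`.
-/

open Set

section Piecewise

variable {X Y : Type*} {f g : X → Y}

lemma measurePreserving_piecewise [MeasurableSpace X] [MeasurableSpace Y]
    {μ : Measure X} {ν : Measure Y} {s : Set X} [DecidablePred (· ∈ s)] {t : Set Y}
    (hf : MeasurePreserving f μ ν) (hg : MeasurePreserving g μ ν) (ht : MeasurableSet t)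
    (hft : f ⁻¹' t = s) (hgt : g ⁻¹' t = s) :
    MeasurePreserving (s.piecewise f g) μ ν := by
  have hs : MeasurableSet s := hft ▸ hf.measurable ht
  have hm : Measurable (s.piecewise f g) := hf.measurable.piecewise hs hg.measurable
  refine ⟨hm, Measure.ext fun A hA => ?_⟩
  calc μ.map (s.piecewise f g) A
      = μ (s.piecewise f g ⁻¹' A ∩ s) + μ (s.piecewise f g ⁻¹' A \ s) := by
        rw [Measure.map_apply hm hA, measure_inter_add_sdiff _ hs]
    _ = μ (f ⁻¹' (A ∩ t)) + μ (g ⁻¹' (A \ t)) := by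
        rw [piecewise_preimage, ite_inter_self, ite_sdiff_self, preimage_inter, preimage_sdiff,
          hft, hgt]
    _ = ν (A ∩ t) + ν (A \ t) := by
        rw [hf.measure_preimage (hA.inter ht).nullMeasurableSet,
          hg.measure_preimage (hA.diff ht).nullMeasurableSet]
    _ = ν A := measure_inter_add_sdiff A ht

lemma continuousOn_union_piecewise_of_isOpen [TopologicalSpace X] [TopologicalSpace Y]
    {s t : Set X} [DecidablePred (· ∈ s)] (hs : IsOpen s) (ht : IsOpen t) (hst : Disjoint s t)
    (hf : ContinuousOn f s) (hg : ContinuousOn g t) :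
    ContinuousOn (s.piecewise f g) (s ∪ t) := by
  have hfs : ContinuousOn (s.piecewise f g) s := hf.congr (piecewise_eqOn s f g)
  have hgt : ContinuousOn (s.piecewise f g) t :=
    hg.congr ((piecewise_eqOn_compl s f g).mono hst.subset_compl_left)
  exact hfs.union_of_isOpen hgt hs ht

end Piecewise

section InfiniteProduct

variable {ι : Type*}

lemma measurePreserving_infinitePi {X Y : ι → Type*} [∀ i, MeasurableSpace (X i)]
    [∀ i, MeasurableSpace (Y i)] {μ : ∀ i, Measure (X i)} [∀ i, IsProbabilityMeasure (μ i)]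
    {ν : ∀ i, Measure (Y i)} {f : ∀ i, X i → Y i} (hf : ∀ i, MeasurePreserving (f i) (μ i) (ν i)) :
    MeasurePreserving (fun x i => f i (x i)) (Measure.infinitePi μ) (Measure.infinitePi ν) where
  measurable := measurable_pi_lambda _ fun i => (hf i).measurable.comp (measurable_pi_apply i)
  map_eq := by
    simp_rw [Measure.infinitePi_map_pi μ fun i => (hf i).measurable, (hf _).map_eq]

lemma measurePreserving_update_infinitePi [DecidableEq ι] {X : ι → Type*}
    [∀ i, MeasurableSpace (X i)] {μ : ∀ i, Measure (X i)} [∀ i, IsProbabilityMeasure (μ i)]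
    {i : ι} {f : X i → X i} (hf : MeasurePreserving f (μ i) (μ i)) :
    MeasurePreserving (fun x => Function.update x i (f (x i)))
      (Measure.infinitePi μ) (Measure.infinitePi μ) := by
  have hupdate : (fun x : ∀ j, X j => Function.update x i (f (x i))) =
      fun x j => Function.update (fun _ => id) i f j (x j) := by
    funext x j
    rcases eq_or_ne j i with rfl | hji <;> simp [*]
  rw [hupdate]
  refine measurePreserving_infinitePi fun j => ?_
  rcases eq_or_ne j i with rfl | hji
  · simpa using hf
  · simpa [hji] using MeasurePreserving.id (μ j)

lemma ae_infinitePi_exists_mem {X : Type*} [MeasurableSpace X] {ν : Measure X}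
    [IsProbabilityMeasure ν] {s : Set ι} (hs : s.Infinite) {t : Set X} (ht : MeasurableSet t)
    (hνt : ν t ≠ 0) :
    ∀ᵐ x ∂Measure.infinitePi fun _ : ι => ν, ∃ i ∈ s, x i ∈ t := by
  have hlt : ν tᶜ < 1 := by
    rw [prob_compl_eq_one_sub ht]
    exact ENNReal.sub_lt_self ENNReal.one_ne_top one_ne_zero hνt
  have hbound (n : ℕ) :
      Measure.infinitePi (fun _ : ι => ν) {x | ¬ ∃ i ∈ s, x i ∈ t} ≤ ν tᶜ ^ n := by
    obtain ⟨J, hJs, rfl⟩ := hs.exists_subset_card_eq n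
    calc Measure.infinitePi (fun _ : ι => ν) {x | ¬ ∃ i ∈ s, x i ∈ t}
        ≤ Measure.infinitePi (fun _ : ι => ν) (Set.pi J fun _ => tᶜ) :=
          measure_mono fun x hx i hi hxi => hx ⟨i, hJs hi, hxi⟩
      _ = ν tᶜ ^ J.card := by
          rw [Measure.infinitePi_pi _ fun _ _ => ht.compl, Finset.prod_const]
  exact nonpos_iff_eq_zero.1 <|
    ge_of_tendsto' (ENNReal.tendsto_pow_atTop_nhds_zero_of_lt_one hlt) hbound

end InfiniteProduct

section Coin

instance : IsProbabilityMeasure coin := PMF.toMeasure.isProbabilityMeasure _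

lemma coin_singleton (b : Bool) : coin {b} = 2⁻¹ := by
  cases b <;> simp [coin, PMF.bernoulli_apply]

lemma measurePreserving_not_coin : MeasurePreserving Bool.not coin coin := by
  refine ⟨measurable_of_countable _, Measure.ext_of_singleton fun b => ?_⟩
  have hpre : Bool.not ⁻¹' {b} = {!b} := by ext a; simp [Bool.not_eq_eq_eq_not]
  rw [Measure.map_apply (measurable_of_countable _) (measurableSet_singleton b), hpre,
    coin_singleton, coin_singleton]

lemma IsFairCoin.eq_infinitePi {μ : Measure (ℕ → Bool)} (hμ : IsFairCoin μ) :
    μ = Measure.infinitePi fun _ => coin :=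
  IsProjectiveLimit.unique hμ (Measure.isProjectiveLimit_infinitePi fun _ => coin)

end Coin

section Metric

attribute [local instance] PiNat.dist

lemma dC_eq_dist (α β : ℕ → Bool) : dC α β = dist α β := by
  rcases eq_or_ne α β with rfl | hne
  · simp [dC, PiNat.dist_self]
  · have hsInf : sInf {n | α n ≠ β n} = PiNat.firstDiff α β :=
      IsLeast.csInf_eq ⟨PiNat.apply_firstDiff_ne hne, fun n hn =>
        not_lt.1 fun hlt => hn (PiNat.apply_eq_of_lt_firstDiff hlt)⟩
    rw [dC, if_neg hne, hsInf, PiNat.dist_eq_of_ne hne, zpow_neg, zpow_natCast, one_div, inv_pow]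

lemma exists_forall_mem_cylinder_dC_lt {δ : ℝ} (hδ : 0 < δ) :
    ∃ n, ∀ α β, α ∈ PiNat.cylinder β n → dC α β < δ := by
  obtain ⟨n, hn⟩ := exists_pow_lt_of_lt_one hδ one_half_lt_one
  refine ⟨n, fun α β h => ?_⟩
  rw [dC_eq_dist]
  exact (PiNat.mem_cylinder_iff_dist_le.1 h).trans_lt hn

lemma apply_zero_eq_of_dC_lt_one {α β : ℕ → Bool} (h : dC α β < 1) : α 0 = β 0 := by
  rw [dC_eq_dist] at h
  exact PiNat.apply_eq_of_dist_lt (n := 0) (by simpa using h) le_rfl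

end Metric

section FirstHeads

/-- The event that the first heads among the tosses `1, 2, 3, …` is at a time in `s`. Toss `0` is
left out so that the event is independent of it. -/
def firstHeadsIn (s : Set ℕ) : Set (ℕ → Bool) :=
  {α | ∃ n ∈ s, IsLeast {k | k ≠ 0 ∧ α k = true} n}

variable {s t : Set ℕ}

lemma firstHeadsIn_union : firstHeadsIn (s ∪ t) = firstHeadsIn s ∪ firstHeadsIn t := by
  ext α
  simp only [firstHeadsIn, mem_union, mem_ofPred_eq, or_and_right, exists_or]

lemma disjoint_firstHeadsIn (hst : Disjoint s t) :
    Disjoint (firstHeadsIn s) (firstHeadsIn t) := by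
  refine Set.disjoint_left.2 ?_
  rintro α ⟨m, hm, hαm⟩ ⟨n, hn, hαn⟩
  exact Set.disjoint_left.1 hst hm (hαm.unique hαn ▸ hn)

lemma isOpen_firstHeadsIn (s : Set ℕ) : IsOpen (firstHeadsIn s) := by
  refine (PiNat.isTopologicalBasis_cylinders fun _ => Bool).isOpen_iff.2 ?_
  rintro α ⟨n, hns, hn⟩
  refine ⟨_, ⟨α, n + 1, rfl⟩, PiNat.self_mem_cylinder α _, fun β hβ => ⟨n, hns, ?_, ?_⟩⟩
  · exact ⟨hn.1.1, (hβ n n.lt_succ_self).trans hn.1.2⟩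
  · rintro k ⟨hk0, hk⟩
    by_contra! hkn
    exact hkn.not_ge (hn.2 ⟨hk0, (hβ k (hkn.trans n.lt_succ_self)).symm.trans hk⟩)

lemma update_zero_mem_firstHeadsIn {α : ℕ → Bool} {b : Bool} :
    Function.update α 0 b ∈ firstHeadsIn s ↔ α ∈ firstHeadsIn s := by
  have hheads : {k | k ≠ 0 ∧ Function.update α 0 b k = true} = {k | k ≠ 0 ∧ α k = true} := by
    ext k
    exact and_congr_right fun hk => by rw [Function.update_of_ne hk]
  simp only [firstHeadsIn, mem_ofPred_eq, hheads]

lemma ae_mem_firstHeadsIn_univ :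
    ∀ᵐ α ∂Measure.infinitePi fun _ => coin, α ∈ firstHeadsIn univ := by
  have htrue : coin {true} ≠ 0 := by simp [coin_singleton]
  filter_upwards [ae_infinitePi_exists_mem (finite_singleton 0).infinite_compl
    (measurableSet_singleton true) htrue] with α hα
  classical
  exact ⟨Nat.find hα, mem_univ _, Nat.isLeast_find hα⟩

/-- The outcome with tails before time `n` and heads from time `n` on. These outcomes converge to
all tails, where the parity of the time of the first heads has no limit. -/
def tailsUntil (n : ℕ) : ℕ → Bool := fun k => decide (n ≤ k)

lemma tailsUntil_mem_firstHeadsIn_iff {n : ℕ} (hn : n ≠ 0) :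
    tailsUntil n ∈ firstHeadsIn s ↔ n ∈ s := by
  have hleast : IsLeast {k | k ≠ 0 ∧ tailsUntil n k = true} n :=
    ⟨⟨hn, decide_eq_true le_rfl⟩, fun k hk => of_decide_eq_true hk.2⟩
  exact ⟨fun ⟨_, hms, hm⟩ => hleast.unique hm ▸ hms, fun hns => ⟨n, hns, hleast⟩⟩

lemma tailsUntil_mem_cylinder_tailsUntil {m n k : ℕ} (hm : k ≤ m) (hn : k ≤ n) :
    tailsUntil m ∈ PiNat.cylinder (tailsUntil n) k := fun i hi => by
  rw [tailsUntil, tailsUntil, decide_eq_false (hi.trans_le hm).not_ge,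
    decide_eq_false (hi.trans_le hn).not_ge]

end FirstHeads

section ParityFlip

open Classical in
/-- The tossing process that reverses toss `0` exactly when the first heads among the later tosses
comes at an even time. Off `firstHeadsIn univ`, where there is no such heads, it is the identity. -/
noncomputable def parityFlip : (ℕ → Bool) → ℕ → Bool :=
  (firstHeadsIn {n | Even n}).piecewise (fun α => Function.update α 0 (!α 0)) id

lemma measurePreserving_parityFlip :
    MeasurePreserving parityFlip
      (Measure.infinitePi fun _ => coin) (Measure.infinitePi fun _ => coin) := by
  classical
  exact measurePreserving_piecewise
    (measurePreserving_update_infinitePi (μ := fun _ => coin) measurePreserving_not_coin) (.id _)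
    (isOpen_firstHeadsIn _).measurableSet
    (Set.ext fun _ => update_zero_mem_firstHeadsIn) preimage_id

lemma continuousOn_parityFlip : ContinuousOn parityFlip (firstHeadsIn univ) := by
  classical
  rw [← union_compl_self {n | Even n}, firstHeadsIn_union]
  have hflip : Continuous fun α : ℕ → Bool => Function.update α 0 (!α 0) := by fun_prop
  exact continuousOn_union_piecewise_of_isOpen (isOpen_firstHeadsIn _) (isOpen_firstHeadsIn _)
    (disjoint_firstHeadsIn disjoint_compl_right) hflip.continuousOn continuousOn_id

lemma exists_mem_cylinder_parityFlip_zero_ne (n : ℕ) :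
    ∃ α ∈ firstHeadsIn univ, ∃ β ∈ firstHeadsIn univ,
      α ∈ PiNat.cylinder β n ∧ parityFlip α 0 ≠ parityFlip β 0 := by
  classical
  have heven : tailsUntil (2 * n + 2) ∈ firstHeadsIn {n | Even n} :=
    (tailsUntil_mem_firstHeadsIn_iff (by omega)).2 (by simp [parity_simps])
  have hodd : tailsUntil (2 * n + 3) ∉ firstHeadsIn {n | Even n} :=
    mt (tailsUntil_mem_firstHeadsIn_iff (by omega)).1 (by simp [parity_simps])
  refine ⟨tailsUntil (2 * n + 2), (tailsUntil_mem_firstHeadsIn_iff (by omega)).2 (mem_univ _),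
    tailsUntil (2 * n + 3), (tailsUntil_mem_firstHeadsIn_iff (by omega)).2 (mem_univ _),
    tailsUntil_mem_cylinder_tailsUntil (by omega) (by omega), ?_⟩
  rw [parityFlip, piecewise_eq_of_mem _ _ _ heven, piecewise_eq_of_notMem _ _ _ hodd]
  simp [tailsUntil]

end ParityFlip

/-- There is a partial tossing process (a map `T` defined on a Borel set `D` of full
measure, with `μ (D ∩ T⁻¹ A) = μ A` for all measurable `A`) that is continuous on `D`
for the product topology but not uniformly continuous on `D` for the standard metric. -/
theorem stmt6 (μ : Measure (ℕ → Bool)) (hμ : IsFairCoin μ) :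
    ∃ (D : Set (ℕ → Bool)) (T : (ℕ → Bool) → ℕ → Bool),
      MeasurableSet D ∧ μ D = 1 ∧
      (∀ A : Set (ℕ → Bool), MeasurableSet A → μ (D ∩ T ⁻¹' A) = μ A) ∧
      ContinuousOn T D ∧
      ¬ (∀ ε : ℝ, 0 < ε → ∃ δ : ℝ, 0 < δ ∧
          ∀ α ∈ D, ∀ β ∈ D, dC α β < δ → dC (T α) (T β) < ε) := by
  obtain rfl := hμ.eq_infinitePi
  have hae := ae_mem_firstHeadsIn_univ
  have hD : MeasurableSet (firstHeadsIn univ) := (isOpen_firstHeadsIn univ).measurableSet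
  refine ⟨firstHeadsIn univ, parityFlip, hD, (mem_ae_iff_prob_eq_one hD).1 hae, fun A hA => ?_,
    continuousOn_parityFlip, fun hunif => ?_⟩
  · rw [inter_comm, measure_inter_conull (t := firstHeadsIn univ) hae,
      measurePreserving_parityFlip.measure_preimage hA.nullMeasurableSet]
  · obtain ⟨δ, hδ, hT⟩ := hunif 1 one_pos
    obtain ⟨n, hn⟩ := exists_forall_mem_cylinder_dC_lt hδ
    obtain ⟨α, hα, β, hβ, hαβ, hne⟩ := exists_mem_cylinder_parityFlip_zero_ne n
    exact hne (apply_zero_eq_of_dC_lt_one (hT α hα β hβ (hn α β hαβ)))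
end

section
/- Every continuous tossing process is surjective: if T : (ℕ → Bool) → (ℕ → Bool) is continuous for the product topology and measure-preserving for the fair-coin measure μ (μ(T⁻¹(A)) = μ(A) for all measurable A), then T is surjective. -/
open MeasureTheory

/-!
A nonempty open set contains a nonempty cylinder, so the fair-coin measure charges every nonempty
open set. The range of a continuous self-map of Cantor space is compact, so its complement is open;
the preimage of that complement is empty, so a measure-preserving map leaves it with measure zero
and it must be empty.
-/

theorem isOpenPosMeasure_toMeasure_of_dense_support {α : Type*} [TopologicalSpace α]
    [MeasurableSpace α] [OpensMeasurableSpace α] {p : PMF α} (hp : Dense p.support) :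
    p.toMeasure.IsOpenPosMeasure where
  open_pos U hU hU_nonempty hU0 := by
    rw [p.toMeasure_apply_eq_zero_iff hU.measurableSet] at hU0
    obtain ⟨a, haU, hap⟩ := hp.inter_open_nonempty U hU hU_nonempty
    exact Set.disjoint_left.1 hU0 hap haU

theorem isOpenPosMeasure_of_isProjectiveLimit {ι : Type*} {α : ι → Type*}
    [∀ i, TopologicalSpace (α i)] [∀ i, MeasurableSpace (α i)] [∀ i, OpensMeasurableSpace (α i)]
    {P : ∀ J : Finset ι, Measure (∀ j : J, α j)} [∀ J, (P J).IsOpenPosMeasure]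
    {μ : Measure (∀ i, α i)} (hμ : IsProjectiveLimit μ P) : μ.IsOpenPosMeasure where
  open_pos U hU := by
    rintro ⟨x, hx⟩ hU0
    obtain ⟨J, u, hu, hJU⟩ := isOpen_pi_iff.1 hU x hx
    let S : Set (∀ j : J, α j) := Set.univ.pi fun j => u j
    have hSU : cylinder J S ⊆ U := fun y hy => hJU fun i hi => hy ⟨i, hi⟩ trivial
    have hS_open : IsOpen S := isOpen_set_pi Set.finite_univ fun j _ => (hu j j.2).1
    have hS_nonempty : S.Nonempty := ⟨J.restrict x, fun j _ => (hu j j.2).2⟩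
    have hS_meas : MeasurableSet S :=
      MeasurableSet.univ_pi fun j => (hu j j.2).1.measurableSet
    refine hS_open.measure_ne_zero (P J) hS_nonempty ?_
    rw [← hμ.measure_cylinder J hS_meas]
    exact measure_mono_null hSU hU0

instance inst_s10 : IsProbabilityMeasure coin := PMF.toMeasure.isProbabilityMeasure _

instance : coin.IsOpenPosMeasure :=
  isOpenPosMeasure_toMeasure_of_dense_support fun b =>
    subset_closure <| (PMF.mem_support_iff _ b).2 <| by cases b <;> simp [PMF.bernoulli_apply]

theorem IsFairCoin.isOpenPosMeasure {μ : Measure (ℕ → Bool)} (hμ : IsFairCoin μ) :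
    μ.IsOpenPosMeasure :=
  isOpenPosMeasure_of_isProjectiveLimit hμ

section PreimageNull

variable {X Y : Type*} [MeasurableSpace X] [TopologicalSpace Y] [MeasurableSpace Y]
  {μ : Measure X} {ν : Measure Y} [ν.IsOpenPosMeasure] {T : X → Y}

theorem denseRange_of_measure_preimage_eq_zero
    (hT : ∀ U : Set Y, IsOpen U → μ (T ⁻¹' U) = 0 → ν U = 0) : DenseRange T := by
  refine dense_iff_inter_open.2 fun U hU hU_nonempty => ?_
  have hTU : μ (T ⁻¹' U) ≠ 0 := fun h => hU.measure_ne_zero ν hU_nonempty (hT U hU h)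
  obtain ⟨x, hx⟩ := nonempty_of_measure_ne_zero hTU
  exact ⟨T x, hx, x, rfl⟩

theorem stmt10_general [TopologicalSpace X] [CompactSpace X] [T2Space Y] (hc : Continuous T)
    (hT : ∀ U : Set Y, IsOpen U → μ (T ⁻¹' U) = 0 → ν U = 0) : Function.Surjective T := by
  have hdense : DenseRange T := denseRange_of_measure_preimage_eq_zero hT
  have hclosed : IsClosed (Set.range T) := (isCompact_range hc).isClosed
  exact Set.range_eq_univ.1 (hclosed.closure_eq ▸ hdense.closure_range)

end PreimageNull

/-- Every continuous tossing process is surjective: a map on Cantor space that is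
continuous for the product topology and measure-preserving for the fair-coin measure
is surjective. -/
theorem stmt10 (μ : Measure (ℕ → Bool)) (hμ : IsFairCoin μ)
    (T : (ℕ → Bool) → ℕ → Bool) (hc : Continuous T)
    (hmp : ∀ A : Set (ℕ → Bool), MeasurableSet A → μ (T ⁻¹' A) = μ A) :
    Function.Surjective T := by
  have := hμ.isOpenPosMeasure
  exact stmt10_general hc fun U hU hTU => hmp U hU.measurableSet ▸ hTU
end

section
/- Let B# be the poset of finite and infinite binary strings under the prefix order, modeled as B# = {f : ℕ → Option Bool // ∀ n, f (n+1) ≠ none → f n ≠ none} with f ⊑ g iff ∀ n b, f n = some b → g n = some b, equipped with the Scott topology, and let ι : (ℕ → Bool) → B# be the embedding (ι α) n = some (α n). Then: (i) for every Scott-open subset B of B#, the preimage ι⁻¹(B) is open in the product (Cantor) topology on ℕ → Bool; (ii) for every Cantor-open set A ⊆ (ℕ → Bool), the set B_A = {x ∈ B# | ∀ α, x ⊑ ι α → α ∈ A} is Scott-open, ι⁻¹(B_A) = A, and B_A is the largest Scott-open subset B of B# with ι⁻¹(B) = A (i.e., any Scott-open B with ι⁻¹(B) = A satisfies B ⊆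 B_A). -/
/-- `B#`: the domain of finite and infinite binary strings, modeled as monotone-domain
functions `ℕ → Option Bool` (defined on an initial segment of `ℕ`). -/
def Bsharp : Type := {f : ℕ → Option Bool // ∀ n, f (n + 1) ≠ none → f n ≠ none}

/-- The prefix (information) order on `B#`. -/
instance : PartialOrder Bsharp where
  le f g := ∀ n b, f.1 n = some b → g.1 n = some b
  le_refl _ _ _ h := h
  le_trans _ _ _ hfg hgh n b hb := hgh n b (hfg n b hb)
  le_antisymm f g hfg hgf := by
    apply Subtype.ext
    funext n
    cases hf : f.1 n with
    | none =>
      cases hg : g.1 n with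
      | none => rfl
      | some b =>
        have h2 := hgf n b hg
        rw [hf] at h2
        exact h2
    | some b => exact (hfg n b hf).symm

/-- `B#` carries the Scott topology. -/
instance : TopologicalSpace Bsharp := Topology.scott Bsharp Set.univ

/-- The embedding of Cantor space (infinite binary strings) into `B#`. -/
def iota (α : ℕ → Bool) : Bsharp :=
  ⟨fun n => some (α n), fun n _ => Option.some_ne_none (α n)⟩

/-!
Openness of `B_A` is compactness of Cantor space: if `a` is the supremum of a directed set `d` and
lies in `B_A`, the closed sets `{α | p ⊑ ι α}`, for `p ∈ d`, form a directed family whose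
intersection `{α | a ⊑ ι α}` is contained in `A`, so one of them already is. Continuity of `ι` holds
because `ι α` is the directed supremum of its finite prefixes, and the sequences extending a finite
prefix form a cylinder, which is a neighbourhood of `α`.
-/

open Set Topology

section UpperCore

variable {X P : Type*} [Preorder P] {f : X → P} {A : Set X} {B : Set P}

/-- The set `B_A` for an arbitrary map `f` in place of `ι`: the largest upper set of `P` whose
preimage under `f` is contained in `A`. It is the complement of the lower closure of the image
of `Aᶜ`. -/
def upperCore (f : X → P) (A : Set X) : Set P :=
  {p | ∀ x, p ≤ f x → x ∈ A}

theorem isUpperSet_upperCore : IsUpperSet (upperCore f A) :=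
  fun _ _ hpq hp x hqx => hp x (hpq.trans hqx)

theorem subset_upperCore_iff (hB : IsUpperSet B) :
    B ⊆ upperCore f A ↔ f ⁻¹' B ⊆ A :=
  ⟨fun h x hx => h hx x le_rfl, fun h _ hp _ hpx => h (hB hpx hp)⟩

variable [TopologicalSpace X]

theorem preimage_upperCore (hf : ∀ ⦃x y⦄, f x ≤ f y → y ⤳ x) (hA : IsOpen A) :
    f ⁻¹' upperCore f A = A :=
  ((subset_upperCore_iff isUpperSet_upperCore).1 Subset.rfl).antisymm
    fun _ hx _ hxy => (hf hxy).mem_open hA hx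

theorem dirSupInacc_upperCore (hf : ∀ p, IsClosed {x | p ≤ f x}) (hA : IsCompact Aᶜ) :
    DirSupInacc (upperCore f A) := by
  intro d hne hdir a hlub ha
  have : Nonempty d := hne.to_subtype
  have hinter : Aᶜ ∩ ⋂ p : d, {x | (p : P) ≤ f x} = ∅ := by
    refine eq_empty_of_forall_notMem fun x ⟨hxA, hx⟩ => hxA (ha x (hlub.2 fun p hp => ?_))
    exact mem_iInter.1 hx ⟨p, hp⟩
  have hanti : Directed (· ⊇ ·) fun p : d => {x | (p : P) ≤ f x} :=
    fun p q => (hdir.directed_val p q).imp fun _ h =>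
      ⟨fun _ hx => h.1.trans hx, fun _ hx => h.2.trans hx⟩
  obtain ⟨p, hp⟩ := hA.elim_directed_family_closed _ (fun p : d => hf p) hinter hanti
  exact ⟨p, p.2, fun x hpx => by_contra fun hxA => (hp.le ⟨hxA, hpx⟩).elim⟩

variable [TopologicalSpace P] [IsScott P univ]

theorem isOpen_upperCore (hf : ∀ p, IsClosed {x | p ≤ f x}) (hA : IsCompact Aᶜ) :
    IsOpen (upperCore f A) :=
  (IsScott.isOpen_iff_isUpperSet_and_dirSupInaccOn (D := univ)).2
    ⟨isUpperSet_upperCore, dirSupInaccOn_univ.2 (dirSupInacc_upperCore hf hA)⟩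

theorem continuousAt_of_isLUB_of_mem_nhds {x : X} {d : Set P} (hne : d.Nonempty)
    (hdir : DirectedOn (· ≤ ·) d) (hlub : IsLUB d (f x)) (hd : ∀ p ∈ d, {y | p ≤ f y} ∈ 𝓝 x) :
    ContinuousAt f x := by
  refine tendsto_nhds.2 fun U hU hxU => ?_
  obtain ⟨hupper, hinacc⟩ := (IsScott.isOpen_iff_isUpperSet_and_dirSupInaccOn (D := univ)).1 hU
  obtain ⟨p, hpd, hpU⟩ := hinacc (mem_univ d) hne hdir hlub hxU
  exact Filter.mem_of_superset (hd p hpd) fun _ hpy => hupper hpy hpU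

theorem stmt15_general [CompactSpace X] (hspec : ∀ ⦃x y⦄, f x ≤ f y → y ⤳ x)
    (hclosed : ∀ p, IsClosed {x | p ≤ f x})
    (hlub : ∀ x, ∃ d : Set P, d.Nonempty ∧ DirectedOn (· ≤ ·) d ∧ IsLUB d (f x) ∧
      ∀ p ∈ d, {y | p ≤ f y} ∈ 𝓝 x) :
    (∀ B : Set P, IsOpen B → IsOpen (f ⁻¹' B)) ∧
    ∀ A : Set X, IsOpen A →
      IsOpen (upperCore f A) ∧ f ⁻¹' upperCore f A = A ∧
      ∀ B : Set P, IsOpen B → f ⁻¹' B = A → B ⊆ upperCore f A := by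
  have hcont : Continuous f := continuous_iff_continuousAt.2 fun x =>
    let ⟨_, hne, hdir, hx, hd⟩ := hlub x
    continuousAt_of_isLUB_of_mem_nhds hne hdir hx hd
  refine ⟨fun B hB => hB.preimage hcont, fun A hA => ⟨?_, preimage_upperCore hspec hA, ?_⟩⟩
  · exact isOpen_upperCore hclosed hA.isClosed_compl.isCompact
  · exact fun B hB hBA =>
      (subset_upperCore_iff (IsScott.isUpperSet_of_isOpen (D := univ) hB)).2 hBA.subset

end UpperCore

instance : IsScott Bsharp univ := ⟨rfl⟩

namespace Bsharp

variable {x : Bsharp} {α β : ℕ → Bool} {n : ℕ}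

theorem le_iota_iff : x ≤ iota α ↔ ∀ n b, x.1 n = some b → α n = b :=
  forall₃_congr fun _ _ _ => Option.some_inj

theorem eq_of_iota_le_iota (h : iota α ≤ iota β) : α = β :=
  funext fun n => (le_iota_iff.1 h n (α n) rfl).symm

theorem isClosed_setOf_le_iota (x : Bsharp) : IsClosed {α | x ≤ iota α} := by
  simp only [le_iota_iff, ofPred_forall]
  exact isClosed_iInter fun n => isClosed_iInter fun b => isClosed_iInter fun _ =>
    isClosed_eq (continuous_apply n) continuous_const

/-- The finite string consisting of the first `n` bits of `α`, approximating `iota α` from below;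
it is `none` from index `n` on. -/
def take (α : ℕ → Bool) (n : ℕ) : Bsharp :=
  ⟨fun i => if i < n then some (α i) else none, by grind⟩

theorem take_le_iff : take α n ≤ x ↔ ∀ i < n, x.1 i = some (α i) := by
  refine ⟨fun h i hi => h i (α i) (if_pos hi), fun h i b hb => ?_⟩
  obtain ⟨hi, rfl⟩ : i < n ∧ α i = b := by simpa [take] using hb
  exact h i hi

theorem monotone_take (α : ℕ → Bool) : Monotone (take α) :=
  fun _ _ hmn => take_le_iff.2 fun _ hi => if_pos (hi.trans_le hmn)

theorem isLUB_range_take (α : ℕ → Bool) : IsLUB (range (take α)) (iota α) := by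
  refine ⟨forall_mem_range.2 fun _ => take_le_iff.2 fun _ _ => rfl, fun x hx i b hb => ?_⟩
  have hle : take α (i + 1) ≤ x := hx (mem_range_self _)
  exact (take_le_iff.1 hle i i.lt_succ_self).trans hb

theorem setOf_take_le_iota (α : ℕ → Bool) (n : ℕ) :
    {β | take α n ≤ iota β} = PiNat.cylinder α n :=
  ext fun _ => take_le_iff.trans (forall₂_congr fun _ _ => Option.some_inj)

theorem setOf_take_le_iota_mem_nhds (α : ℕ → Bool) (n : ℕ) :
    {β | take α n ≤ iota β} ∈ 𝓝 α := by
  rw [setOf_take_le_iota]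
  exact (PiNat.isOpen_cylinder _ α n).mem_nhds (PiNat.self_mem_cylinder α n)

theorem exists_directedOn_isLUB_iota (α : ℕ → Bool) :
    ∃ d : Set Bsharp, d.Nonempty ∧ DirectedOn (· ≤ ·) d ∧ IsLUB d (iota α) ∧
      ∀ p ∈ d, {β | p ≤ iota β} ∈ 𝓝 α :=
  ⟨range (take α), range_nonempty _, directedOn_range.2 (monotone_take α).directed_le,
    isLUB_range_take α, forall_mem_range.2 (setOf_take_le_iota_mem_nhds α)⟩

end Bsharp

/-- (i) Preimages under `ι` of Scott-open subsets of `B#` are open in the product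
(Cantor) topology; (ii) for every Cantor-open `A`, the set
`B_A = {x | ∀ α, x ⊑ ι α → α ∈ A}` is Scott-open, satisfies `ι⁻¹ B_A = A`, and is the
largest Scott-open set with this property. -/
theorem stmt15 :
    (∀ B : Set Bsharp, IsOpen B → IsOpen (iota ⁻¹' B)) ∧
    ∀ A : Set (ℕ → Bool), IsOpen A →
      IsOpen {x : Bsharp | ∀ α : ℕ → Bool, x ≤ iota α → α ∈ A} ∧
      iota ⁻¹' {x : Bsharp | ∀ α : ℕ → Bool, x ≤ iota α → α ∈ A} = A ∧
      ∀ B : Set Bsharp, IsOpen B → iota ⁻¹' B = A →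
        B ⊆ {x : Bsharp | ∀ α : ℕ → Bool, x ≤ iota α → α ∈ A} :=
  stmt15_general (fun _ _ h => specializes_of_eq (Bsharp.eq_of_iota_le_iota h).symm)
    Bsharp.isClosed_setOf_le_iota Bsharp.exists_directedOn_isLUB_iota
end

section
/- Let Q be a type and f : (ℕ → Bool) → Set Q → Set Q be such that: (a) for every b : Set Q, the map α ↦ f α b is continuous from the product (Cantor) topology on ℕ → Bool to the Scott topology on Set Q; and (b) for every α, f α is Scott-continuous on Set Q, i.e., f α b = ⋃ {f α ↑c | c : Finset Q, ↑c ⊆ b}. Then for all α and b: f α b = ⋃ over finite c ⊆ b of ⋃ over finite prefixes x of α of ⋂_{β ∈ I_x} f β ↑c, where I_x = {β : ℕ → Bool | x is a prefix of β}. -/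
/-!
For a single point `q`, the family `{s | q ∈ s}` is Scott open, because `{q}` is a compact element
of the lattice of sets. Hence, if `g` is continuous at `α` for the Scott topology and `q ∈ g α`,
then `q ∈ g β` for all `β` in some basic neighbourhood of `α`; conversely `α` lies in each of its
basic neighbourhoods. So `g α` is the union of the sets `⋂ β ∈ I, g β` over the basic neighbourhoods
`I` of `α`. Apply this to `g = f · c` for each finite `c`, with the cylinders as neighbourhoods.
-/

/-- The cylinder determined by a finite binary word `x`: the set of infinite binary
sequences having `x` as a prefix. -/
def Cyl (x : List Bool) : Set (ℕ → Bool) := {α | ∀ i : Fin x.length, α i.1 = x.get i}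

section Scott

open Set Topology

theorem isOpen_Ici_of_isCompactElement {P : Type*} [PartialOrder P] [TopologicalSpace P]
    [IsScott P univ] {k : P} (hk : IsCompactElement k) : IsOpen (Ici k) :=
  (IsScott.isOpen_iff_isUpperSet_and_dirSupInaccOn (D := univ)).2
    ⟨isUpperSet_Ici k, fun d _ hne hdir u hu hku ↦ hk d u hne hdir hu hku⟩

theorem isCompactElement_singleton {Q : Type*} (q : Q) : IsCompactElement ({q} : Set Q) := by
  rw [CompleteLattice.isCompactElement_iff_le_of_directed_sSup_le]
  intro d _ _ hq
  simpa only [sSup_eq_sUnion, singleton_subset_iff, mem_sUnion] using hq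

variable {X Q ι : Type*} [TopologicalSpace X] [TopologicalSpace (Set Q)] [IsScott (Set Q) univ]
  {α : X} {p : ι → Prop} {I : ι → Set X}

theorem isOpen_setOf_mem_of_isScott (q : Q) : IsOpen {s : Set Q | q ∈ s} := by
  simpa only [Ici, singleton_subset_iff] using
    isOpen_Ici_of_isCompactElement (isCompactElement_singleton q)

theorem eq_biUnion_biInter_of_continuousAt_scott {g : X → Set Q} (hg : ContinuousAt g α)
    (hI : (𝓝 α).HasBasis p I) : g α = ⋃ (i) (_ : p i), ⋂ β ∈ I i, g β := by
  ext q
  simp only [mem_iUnion, mem_iInter, exists_prop]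
  constructor
  · intro hq
    exact hI.eventually_iff.1 (hg.eventually ((isOpen_setOf_mem_of_isScott q).mem_nhds hq))
  · rintro ⟨i, hi, hq⟩
    exact hq α (mem_of_mem_nhds (hI.mem_of_mem hi))

theorem stmt17_general {R : Type*} {f : X → Set R → Set Q} {b : Set R}
    (hI : (𝓝 α).HasBasis p I) (ha : ∀ c : Finset R, ContinuousAt (fun β ↦ f β c) α)
    (hb : f α b = ⋃ (c : Finset R) (_ : (c : Set R) ⊆ b), f α c) :
    f α b = ⋃ (c : Finset R) (_ : (c : Set R) ⊆ b), ⋃ (i) (_ : p i), ⋂ β ∈ I i, f β c :=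
  hb.trans <| iUnion₂_congr fun c _ ↦ eq_biUnion_biInter_of_continuousAt_scott (ha c) hI

end Scott

section Cyl

open Topology

theorem cyl_eq_cylinder_of_mem {α : ℕ → Bool} {x : List Bool} (hα : α ∈ Cyl x) :
    Cyl x = PiNat.cylinder α x.length := by
  ext β
  rw [PiNat.mem_cylinder_iff]
  exact ⟨fun hβ i hi ↦ (hβ ⟨i, hi⟩).trans (hα ⟨i, hi⟩).symm,
    fun hβ i ↦ (hβ i i.isLt).trans (hα i)⟩

theorem mem_cyl_ofFn (α : ℕ → Bool) (n : ℕ) : α ∈ Cyl (List.ofFn fun i : Fin n ↦ α i) :=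
  fun i ↦ (List.get_ofFn _ i).symm

theorem hasBasis_nhds_cyl (α : ℕ → Bool) : (𝓝 α).HasBasis (α ∈ Cyl ·) Cyl := by
  refine (PiNat.isTopologicalBasis_cylinders _).nhds_hasBasis.to_hasBasis ?_ ?_
  · rintro _ ⟨⟨γ, n, rfl⟩, hα⟩
    refine ⟨_, mem_cyl_ofFn α n, ?_⟩
    rw [cyl_eq_cylinder_of_mem (mem_cyl_ofFn α n), List.length_ofFn,
      PiNat.mem_cylinder_iff_eq.1 hα]
  · intro x hα
    exact ⟨Cyl x, ⟨⟨α, x.length, cyl_eq_cylinder_of_mem hα⟩, hα⟩, subset_rfl⟩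

end Cyl

/-- Let `f : (ℕ → Bool) → Set Q → Set Q` be (a) continuous in its first argument from the
Cantor topology to the Scott topology on `Set Q` and (b) Scott-continuous in its second
argument. Then `f α b` is the union over finite `c ⊆ b` and finite prefixes `x` of `α` of
`⋂_{β ∈ I_x} f β c`. -/
theorem stmt17 {Q : Type*} (f : (ℕ → Bool) → Set Q → Set Q)
    (ha : ∀ b : Set Q,
      @Continuous (ℕ → Bool) (Set Q) _ (Topology.scott (Set Q) Set.univ) (fun α => f α b))
    (hb : ∀ (α : ℕ → Bool) (b : Set Q),
      f α b = ⋃ (c : Finset Q) (_ : (c : Set Q) ⊆ b), f α (c : Set Q)) :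
    ∀ (α : ℕ → Bool) (b : Set Q),
      f α b = ⋃ (c : Finset Q) (_ : (c : Set Q) ⊆ b),
        ⋃ (x : List Bool) (_ : α ∈ Cyl x), ⋂ β ∈ Cyl x, f β (c : Set Q) := by
  intro α b
  let : TopologicalSpace (Set Q) := Topology.scott (Set Q) Set.univ
  have : Topology.IsScott (Set Q) Set.univ := ⟨rfl⟩
  exact stmt17_general (hasBasis_nhds_cyl α) (fun c ↦ (ha c).continuousAt) (hb α b)
end
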